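/- Let (A,b,c) be a balanced realization of a SISO impulse response g(t) = cA^{t−1}b with pairwise distinct Hankel singular values σ₁ > … > σ_n > 0, and suppose the Hankel matrix H(g) is totally positive. Then for every 1 ≤ r ≤ n the balanced truncation of order r has a totally positive Hankel matrix H(g_r); that is, balanced truncation preserves total positivity of the Hankel matrix for every truncation order. -/

import Mathlib

open Matrix

/-- The controllability matrix `[b, Ab, …, A^{n-1}b]` of a SISO pair `(A, b)`. -/
noncomputable def ctrbMatrix {n : ℕ} (A : Matrix (Fin n) (Fin n) ℝ) (b : Fin n → ℝ) :
    Matrix (Fin n) (Fin n) ℝ :=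
  Matrix.of fun i j => (A ^ (j : ℕ)).mulVec b i

/-- The observability matrix with rows `c, cA, …, cA^{n-1}` of a SISO pair `(c, A)`. -/
noncomputable def obsvMatrix {n : ℕ} (A : Matrix (Fin n) (Fin n) ℝ) (c : Fin n → ℝ) :
    Matrix (Fin n) (Fin n) ℝ :=
  Matrix.of fun i j => Matrix.vecMul c (A ^ (i : ℕ)) j

/-- `(A, b, c)` is a balanced realization with Hankel singular values `σ`. -/
def IsBalancedRealization {n : ℕ} (A : Matrix (Fin n) (Fin n) ℝ)
    (b c : Fin n → ℝ) (σ : Fin n → ℝ) : Prop :=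
  (∀ μ ∈ spectrum ℂ (A.map (Complex.ofReal ·)), ‖μ‖ < 1) ∧
  (ctrbMatrix A b).det ≠ 0 ∧
  (obsvMatrix A c).det ≠ 0 ∧
  (∀ i j : Fin n, i ≤ j → σ j ≤ σ i) ∧ (∀ i, 0 < σ i) ∧
  A * Matrix.diagonal σ * Aᵀ - Matrix.diagonal σ + Matrix.vecMulVec b b = 0 ∧
  Aᵀ * Matrix.diagonal σ * A - Matrix.diagonal σ + Matrix.vecMulVec c c = 0

/-- The impulse response of the balanced truncation of order `r` (indexed so
that `truncResponse A b c r h t` is the value at time `t + 1`). -/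
noncomputable def truncResponse {n : ℕ} (A : Matrix (Fin n) (Fin n) ℝ)
    (b c : Fin n → ℝ) (r : ℕ) (h : r ≤ n) : ℕ → ℝ :=
  fun t => (c ∘ Fin.castLE h) ⬝ᵥ
    ((A.submatrix (Fin.castLE h) (Fin.castLE h)) ^ t).mulVec (b ∘ Fin.castLE h)

/-- The square submatrix of the infinite Hankel matrix `H(g)_{i,j} = g(i+j-1)`
(`i,j ≥ 1`) obtained from rows `ρ` and columns `c` (zero-based indexing of the
sequence: `g t` stands for `g(t+1)`). -/
def hankelSub (g : ℕ → ℝ) {p : ℕ} (ρ c : Fin p → ℕ) : Matrix (Fin p) (Fin p) ℝ :=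
  Matrix.of fun i j => g (ρ i + c j)

/-- The infinite Hankel matrix `H(g)` is totally positive. -/
def HankelTotallyPositive (g : ℕ → ℝ) : Prop :=
  ∀ (p : ℕ) (ρ c : Fin p → ℕ), StrictMono ρ → StrictMono c →
    0 ≤ (hankelSub g ρ c).det

theorem Polynomial.signVariations_lt_card_support {P : Polynomial ℝ} (hP : P ≠ 0) :
    P.signVariations < P.support.card := by
  induction h : P.support.card using Nat.strong_induction_on generalizing P with
  | _ m ih =>
    subst h
    by_cases hE : P.eraseLead = 0
    · have hmono : P = Polynomial.monomial P.natDegree P.leadingCoeff := by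
        have := P.eraseLead_add_monomial_natDegree_leadingCoeff
        rw [hE, zero_add] at this
        exact this.symm
      rw [hmono, Polynomial.signVariations_monomial, ← hmono]
      exact Finset.card_pos.mpr (Polynomial.nonempty_support_iff.mpr hP)
    · have h1 := Polynomial.eraseLead_support_card_lt hP
      have h2 := ih _ h1 hE rfl
      have h3 := P.signVariations_le_eraseLead_succ
      omega

/-- A nonzero real polynomial has fewer distinct positive roots than monomials. -/
theorem Polynomial.card_lt_card_support_of_pos_roots {P : Polynomial ℝ} (hP : P ≠ 0)
    (s : Finset ℝ) (hs : ∀ x ∈ s, 0 < x ∧ P.IsRoot x) : s.card < P.support.card := by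
  refine lt_of_le_of_lt ?_ (Polynomial.signVariations_lt_card_support hP)
  refine le_trans ?_ P.roots_countP_pos_le_signVariations
  rw [Multiset.countP_eq_card_filter]
  refine Multiset.card_le_card ?_
  rw [Multiset.le_iff_subset s.nodup]
  intro x hx
  have := hs x hx
  exact Multiset.mem_filter.mpr ⟨(Polynomial.mem_roots hP).mpr this.2, this.1⟩

/-- Generalized Vandermonde determinants at increasing positive nodes are positive. -/
theorem Matrix.det_generalizedVandermonde_pos {k : ℕ} {x : Fin k → ℝ} {e : Fin k → ℕ}
    (hx : StrictMono x) (hpos : ∀ i, 0 < x i) (he : StrictMono e) :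
    0 < (Matrix.of fun i j => x i ^ e j).det := by
  induction k with
  | zero => simp
  | succ k ih =>
    let M : ℝ → Matrix (Fin (k + 1)) (Fin (k + 1)) ℝ := fun y =>
      Matrix.of fun i j => (Fin.snoc (fun i : Fin k => x i.castSucc) y : Fin (k + 1) → ℝ) i ^ e j
    let a : Fin (k + 1) → ℝ := fun j => (-1) ^ (k + j : ℕ) *
      (Matrix.of fun i l : Fin k => x i.castSucc ^ e (j.succAbove l)).det
    let P : Polynomial ℝ := ∑ j, Polynomial.monomial (e j) (a j)
    have hP : ∀ y, P.eval y = (M y).det := by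
      intro y
      rw [Matrix.det_succ_row _ (Fin.last k), Polynomial.eval_finsetSum]
      refine Finset.sum_congr rfl fun j _ => ?_
      rw [Polynomial.eval_monomial]
      have : (M y).submatrix (Fin.last k).succAbove j.succAbove =
          Matrix.of fun i l : Fin k => x i.castSucc ^ e (j.succAbove l) := by
        ext i l
        simp [M]
      rw [this]
      simp only [a, M, Matrix.of_apply, Fin.snoc_last, Fin.val_last]
      ring
    have hcoeff : ∀ m, P.coeff m = ∑ j, if e j = m then a j else 0 := by
      intro m
      simp [P, Polynomial.finsetSum_coeff, Polynomial.coeff_monomial]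
    have halast : 0 < a (Fin.last k) := by
      have := ih (x := fun i => x i.castSucc) (e := fun l => e l.castSucc)
        (hx.comp Fin.strictMono_castSucc) (fun i => hpos _) (he.comp Fin.strictMono_castSucc)
      simpa [a, ← two_mul] using this
    have hlast : P.coeff (e (Fin.last k)) = a (Fin.last k) := by
      rw [hcoeff]
      simp [he.injective.eq_iff]
    have hP0 : P ≠ 0 := by
      intro h
      rw [h] at hlast
      simp at hlast
      exact halast.ne hlast
    have hdeg : P.natDegree = e (Fin.last k) := by
      refine le_antisymm ?_ (Polynomial.le_natDegree_of_ne_zero (by rw [hlast]; exact halast.ne'))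
      refine Polynomial.natDegree_sum_le_of_forall_le _ _ fun j _ => ?_
      exact (Polynomial.natDegree_monomial_le _).trans (he.monotone (Fin.le_last j))
    have hcard : P.support.card ≤ k + 1 := by
      have : P.support ⊆ Finset.univ.image e := by
        intro m hm
        rw [Polynomial.mem_support_iff, hcoeff] at hm
        obtain ⟨j, -, hj⟩ := Finset.exists_ne_zero_of_sum_ne_zero hm
        exact Finset.mem_image.mpr ⟨j, Finset.mem_univ _, by by_contra h; simp [h] at hj⟩
      calc _ ≤ _ := Finset.card_le_card this
        _ ≤ _ := Finset.card_image_le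
        _ = _ := by simp
    have hroot : ∀ i : Fin k, P.eval (x i.castSucc) = 0 := by
      intro i
      rw [hP]
      refine Matrix.det_zero_of_row_eq (Fin.castSucc_lt_last i).ne ?_
      ext j
      simp [M]
    have hnoroot : ∀ z, x (Fin.last k) ≤ z → P.eval z ≠ 0 := by
      intro z hz h0
      have hinj : Function.Injective (fun i : Fin k => x i.castSucc) :=
        (hx.comp Fin.strictMono_castSucc).injective
      have hlt : ∀ i : Fin k, x i.castSucc < z := fun i =>
        (hx (Fin.castSucc_lt_last i)).trans_le hz
      have hz' : z ∉ Finset.univ.image (fun i : Fin k => x i.castSucc) := by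
        intro h
        obtain ⟨i, -, hi⟩ := Finset.mem_image.mp h
        exact (hlt i).ne hi
      have := Polynomial.card_lt_card_support_of_pos_roots hP0
        (insert z (Finset.univ.image (fun i : Fin k => x i.castSucc))) (by
          intro y hy
          rcases Finset.mem_insert.mp hy with rfl | hy
          · exact ⟨(hpos _).trans_le hz, h0⟩
          · obtain ⟨i, -, rfl⟩ := Finset.mem_image.mp hy
            exact ⟨hpos _, hroot i⟩)
      rw [Finset.card_insert_of_notMem hz', Finset.card_image_of_injective _ hinj] at this
      simp at this
      omega
    have hgoal : 0 < P.eval (x (Fin.last k)) := by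
      by_contra! hle
      have hPdeg : 0 < P.degree := by
        by_contra! h
        rw [Polynomial.eq_C_of_degree_le_zero h] at hle
        have h0 : P.natDegree = 0 := Polynomial.natDegree_eq_zero_iff_degree_le_zero.mpr h
        rw [← hdeg, h0] at hlast
        rw [Polynomial.eval_C, hlast] at hle
        linarith
      have htend := P.tendsto_atTop_of_leadingCoeff_nonneg hPdeg
        (by rw [Polynomial.leadingCoeff, hdeg, hlast]; exact halast.le)
      obtain ⟨y, hy1, hy2⟩ := ((htend.eventually_gt_atTop 0).and
        (Filter.eventually_ge_atTop (x (Fin.last k)))).exists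
      obtain ⟨z, hz, hz0⟩ := intermediate_value_Icc hy2 P.continuous.continuousOn
        ⟨hle, hy1.le⟩
      exact hnoroot z hz.1 hz0
    rw [hP] at hgoal
    convert hgoal using 3
    ext i j
    refine Fin.lastCases ?_ (fun i => ?_) i <;> simp

theorem Matrix.det_generalizedVandermonde_nonneg {k : ℕ} {x : Fin k → ℝ} {e : Fin k → ℕ}
    (hx : Monotone x) (hpos : ∀ i, 0 ≤ x i) (he : StrictMono e) :
    0 ≤ (Matrix.of fun i j => x i ^ e j).det := by
  let f : ℝ → ℝ := fun ε => (Matrix.of fun i j => (x i + ε * (i + 1)) ^ e j).det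
  have hf : Continuous f := by
    refine Continuous.matrix_det (continuous_matrix fun i j => ?_)
    simp only [Matrix.of_apply]
    fun_prop
  have h0 : f 0 = (Matrix.of fun i j => x i ^ e j).det := by simp [f]
  rw [← h0]
  refine ge_of_tendsto (hf.tendsto 0 |>.mono_left (nhdsWithin_le_nhds (s := Set.Ioi 0))) ?_
  filter_upwards [self_mem_nhdsWithin] with ε (hε : 0 < ε)
  refine (Matrix.det_generalizedVandermonde_pos (fun i j hij => ?_) (fun i => ?_) he).le
  · have h1 := hx hij.le
    have h2 : ((i : ℕ) : ℝ) < ((j : ℕ) : ℝ) := by exact_mod_cast hij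
    nlinarith
  · have := hpos i
    positivity

theorem Matrix.det_generalizedVandermonde_mul_nonneg {k : ℕ} {x : Fin k → ℝ} {d e : Fin k → ℕ}
    (hpos : ∀ i, 0 ≤ x i) (hd : StrictMono d) (he : StrictMono e) :
    0 ≤ (Matrix.of fun i j => x i ^ d j).det * (Matrix.of fun i j => x i ^ e j).det := by
  have hsort : ∀ e : Fin k → ℕ, (Matrix.of fun i j => x (Tuple.sort x i) ^ e j).det =
      Equiv.Perm.sign (Tuple.sort x) * (Matrix.of fun i j => x i ^ e j).det := fun e =>
    Matrix.det_permute (Tuple.sort x) (Matrix.of fun i j => x i ^ e j)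
  have h1 := mul_nonneg
    (Matrix.det_generalizedVandermonde_nonneg (Tuple.monotone_sort x) (fun i => hpos _) hd)
    (Matrix.det_generalizedVandermonde_nonneg (Tuple.monotone_sort x) (fun i => hpos _) he)
  simp only [Function.comp_apply] at h1
  rw [hsort, hsort] at h1
  rcases Int.units_eq_one_or (Equiv.Perm.sign (Tuple.sort x)) with h | h <;>
    simpa [h] using h1

/-- The discrete Andréief identity. -/
theorem Matrix.factorial_mul_det_sum {ι : Type*} [Fintype ι] {p : ℕ} (w : ι → ℝ)
    (u v : Fin p → ι → ℝ) :
    (p.factorial : ℝ) * (Matrix.of fun i j => ∑ l, w l * u i l * v j l).det =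
      ∑ φ : Fin p → ι, (∏ i, w (φ i)) * ((Matrix.of fun i j => u j (φ i)).det *
        (Matrix.of fun i j => v j (φ i)).det) := by
  classical
  have hexp : (Matrix.of fun i j => ∑ l, w l * u i l * v j l).det =
      ∑ φ : Fin p → ι, (∏ i, w (φ i) * u i (φ i)) * (Matrix.of fun i j => v j (φ i)).det := by
    have h := (Matrix.detRowAlternating (R := ℝ) (n := Fin p)).toMultilinearMap.map_sum
      (fun i (l : ι) => fun j => w l * u i l * v j l)
    have h2 : (fun i => ∑ l, fun j => w l * u i l * v j l) =
        (fun i j => ∑ l, w l * u i l * v j l) := by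
      ext i j; simp
    rw [h2] at h
    refine h.trans (Finset.sum_congr rfl fun φ _ => ?_)
    exact Matrix.det_mul_column (fun i => w (φ i) * u i (φ i)) (Matrix.of fun i j => v j (φ i))
  have hperm : ∀ π : Equiv.Perm (Fin p), (Matrix.of fun i j => ∑ l, w l * u i l * v j l).det =
      ∑ φ : Fin p → ι, (∏ i, w (φ i)) * ((Equiv.Perm.sign π * ∏ i, u i (φ (π i))) *
        (Matrix.of fun i j => v j (φ i)).det) := by
    intro π
    rw [hexp, ← (Equiv.arrowCongr π (Equiv.refl ι)).symm.sum_comp]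
    refine Finset.sum_congr rfl fun φ _ => ?_
    have h1 : (Matrix.of fun i j => v j (φ (π i))).det =
        Equiv.Perm.sign π * (Matrix.of fun i j => v j (φ i)).det :=
      Matrix.det_permute π (Matrix.of fun i j => v j (φ i))
    simp only [Equiv.arrowCongr_symm, Equiv.arrowCongr_apply, Equiv.refl_symm, Equiv.coe_refl,
      Function.comp_apply, id, Equiv.symm_symm]
    rw [h1, Finset.prod_mul_distrib, Equiv.prod_comp π (fun i => w (φ i))]
    ring
  calc _ = ∑ π : Equiv.Perm (Fin p), (Matrix.of fun i j => ∑ l, w l * u i l * v j l).det := by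
        simp [Fintype.card_perm]
    _ = _ := by
      rw [Finset.sum_congr rfl fun π _ => hperm π, Finset.sum_comm]
      refine Finset.sum_congr rfl fun φ _ => ?_
      rw [← Finset.mul_sum, ← Finset.sum_mul, Matrix.det_apply' (Matrix.of fun i j => u j (φ i))]
      rfl

theorem Matrix.det_sum_mul_pow_nonneg {ι : Type*} [Fintype ι] {p : ℕ} {w x : ι → ℝ}
    (hw : ∀ l, 0 ≤ w l) (hx : ∀ l, 0 ≤ x l) {d e : Fin p → ℕ} (hd : StrictMono d)
    (he : StrictMono e) :
    0 ≤ (Matrix.of fun i j => ∑ l, w l * x l ^ (d i + e j)).det := by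
  have h := Matrix.factorial_mul_det_sum w (fun i l => x l ^ d i) (fun j l => x l ^ e j)
  simp only [mul_assoc, ← pow_add] at h
  refine nonneg_of_mul_nonneg_right (h.symm ▸ Finset.sum_nonneg fun φ _ => ?_)
    (by positivity : (0 : ℝ) < p.factorial)
  exact mul_nonneg (Finset.prod_nonneg fun i _ => hw _)
    (Matrix.det_generalizedVandermonde_mul_nonneg (fun i => hx _) hd he)

/-- A real symmetric matrix with nonnegative principal minors is positive semidefinite. -/
theorem Matrix.PosSemidef.of_principal_minors_nonneg {m : ℕ} {M : Matrix (Fin m) (Fin m) ℝ}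
    (hM : M.IsHermitian)
    (h : ∀ (p : ℕ) (f : Fin p → Fin m), StrictMono f → 0 ≤ (M.submatrix f f).det) :
    M.PosSemidef := by
  induction m with
  | zero => exact .of_dotProduct_mulVec_nonneg hM fun x => by simp [dotProduct]
  | succ m ih =>
    rw [hM.posSemidef_iff_eigenvalues_nonneg]
    by_contra hneg
    obtain ⟨i, hi⟩ : ∃ i, hM.eigenvalues i < 0 := by
      simpa [Pi.le_def] using hneg
    obtain ⟨j, hji, hj⟩ : ∃ j, j ≠ i ∧ hM.eigenvalues j ≤ 0 := by
      by_contra! hcon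
      have hdet : 0 ≤ M.det := by simpa using h _ id strictMono_id
      rw [hM.det_eq_prod_eigenvalues, ← Finset.mul_prod_erase _ _ (Finset.mem_univ i)] at hdet
      have : 0 < ∏ j ∈ Finset.univ.erase i, hM.eigenvalues j :=
        Finset.prod_pos fun j hj => hcon j (Finset.ne_of_mem_erase hj)
      simp only [RCLike.ofReal_real_eq_id, id] at hdet
      nlinarith
    let u : Fin (m + 1) → ℝ := hM.eigenvectorBasis i
    let v : Fin (m + 1) → ℝ := hM.eigenvectorBasis j
    have horth : ∀ a b, (hM.eigenvectorBasis a : Fin (m + 1) → ℝ) ⬝ᵥ hM.eigenvectorBasis b =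
        if a = b then 1 else 0 := by
      intro a b
      have := orthonormal_iff_ite.mp hM.eigenvectorBasis.orthonormal a b
      rw [← this, EuclideanSpace.inner_eq_star_dotProduct, dotProduct_comm]
      simp
    have hMu : M *ᵥ u = hM.eigenvalues i • u := hM.mulVec_eigenvectorBasis i
    have hMv : M *ᵥ v = hM.eigenvalues j • v := hM.mulVec_eigenvectorBasis j
    have huu : u ⬝ᵥ u = 1 := by simp [u, horth]
    have hvv : v ⬝ᵥ v = 1 := by simp [v, horth]
    have huv : u ⬝ᵥ v = 0 := by simp [u, v, horth, hji.symm]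
    have hvu : v ⬝ᵥ u = 0 := by rw [dotProduct_comm, huv]
    obtain ⟨k, hk⟩ : ∃ k, v k ≠ 0 := by
      by_contra! hv
      simp [dotProduct, hv] at hvv
    let w := u - (u k / v k) • v
    have hwk : w k = 0 := by simp [w, hk]
    have hform : w ⬝ᵥ (M *ᵥ w) = hM.eigenvalues i + (u k / v k) ^ 2 * hM.eigenvalues j := by
      simp only [w, mulVec_sub, mulVec_smul, hMu, hMv, sub_dotProduct, dotProduct_sub,
        smul_dotProduct, dotProduct_smul, huu, hvv, huv, hvu, smul_eq_mul]
      ring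
    have hsub : (M.submatrix k.succAbove k.succAbove).PosSemidef :=
      ih (hM.submatrix _) fun p f hf => by
        simpa using h p (k.succAbove ∘ f) ((Fin.strictMono_succAbove k).comp hf)
    have hpos := hsub.dotProduct_mulVec_nonneg (w ∘ k.succAbove)
    have heq : w ⬝ᵥ (M *ᵥ w) = (w ∘ k.succAbove) ⬝ᵥ
        ((M.submatrix k.succAbove k.succAbove) *ᵥ (w ∘ k.succAbove)) := by
      simp [dotProduct, mulVec, Fin.sum_univ_succAbove _ k, hwk]
    rw [star_trivial, ← heq, hform] at hpos
    nlinarith [mul_nonneg (sq_nonneg (u k / v k)) (neg_nonneg.mpr hj)]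

/-- The impulse response of a symmetric positive semidefinite system has a totally positive
Hankel matrix. -/
theorem Matrix.PosSemidef.hankelTotallyPositive {r : ℕ} {A : Matrix (Fin r) (Fin r) ℝ}
    (hA : A.PosSemidef) (b : Fin r → ℝ) :
    HankelTotallyPositive (fun t => b ⬝ᵥ (A ^ t).mulVec b) := by
  intro p ρ κ hρ hκ
  let U : Matrix (Fin r) (Fin r) ℝ := hA.isHermitian.eigenvectorUnitary
  let x := hA.isHermitian.eigenvalues
  have hU : star U * U = 1 := Unitary.coe_star_mul_self hA.isHermitian.eigenvectorUnitary
  have hU' : U * star U = 1 := Unitary.coe_mul_star_self hA.isHermitian.eigenvectorUnitary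
  have hspec : A = U * diagonal x * star U := by
    have := hA.isHermitian.spectral_theorem
    rw [Unitary.conjStarAlgAut_apply] at this
    exact this
  have hpow : ∀ t, A ^ t = U * diagonal (fun l => x l ^ t) * star U := by
    intro t
    induction t with
    | zero => simp [hU']
    | succ t ih =>
      rw [pow_succ, ih]
      calc _ = U * diagonal (fun l => x l ^ t) * star U * (U * diagonal x * star U) := by
            rw [← hspec]
        _ = U * diagonal (fun l => x l ^ t) * (star U * U) * diagonal x * star U := by
            simp only [Matrix.mul_assoc]
        _ = _ := by
            rw [hU, Matrix.mul_one, Matrix.mul_assoc U, diagonal_mul_diagonal]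
            simp only [pow_succ]
  have hg : ∀ t, b ⬝ᵥ (A ^ t).mulVec b = ∑ l, (star U *ᵥ b) l ^ 2 * x l ^ t := by
    intro t
    have hb : b ᵥ* U = star U *ᵥ b := by
      rw [← mulVec_transpose]
      rfl
    rw [hpow, ← mulVec_mulVec, ← mulVec_mulVec, dotProduct_mulVec, hb]
    simp only [dotProduct, mulVec_diagonal]
    exact Finset.sum_congr rfl fun l _ => by ring
  simp only [hankelSub, hg]
  exact Matrix.det_sum_mul_pow_nonneg (fun l => sq_nonneg _) hA.eigenvalues_nonneg hρ hκ

section PowTendsto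

attribute [local instance] Matrix.linftyOpNormedRing Matrix.linftyOpNormedAlgebra

theorem Matrix.tendsto_pow_zero_of_spectrum_lt_one {n : ℕ} {A : Matrix (Fin n) (Fin n) ℂ}
    (hA : ∀ μ ∈ spectrum ℂ A, ‖μ‖ < 1) :
    Filter.Tendsto (fun k => A ^ k) Filter.atTop (nhds 0) := by
  rcases isEmpty_or_nonempty (Fin n) with hn | hn
  · have : ∀ k, A ^ k = 0 := fun k => Subsingleton.elim _ _
    simp [this]
  have hlt : spectralRadius ℂ A < (1 : NNReal) :=
    spectrum.spectralRadius_lt_of_forall_lt A fun z hz => by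
      have := hA z hz
      exact_mod_cast this
  obtain ⟨q, hq, hq1⟩ := ENNReal.lt_iff_exists_nnreal_btwn.mp hlt
  have hq1' : q < 1 := by exact_mod_cast hq1
  have hgelf := spectrum.pow_nnnorm_pow_one_div_tendsto_nhds_spectralRadius A
  suffices h : Filter.Tendsto (fun k => ‖A ^ k‖) Filter.atTop (nhds 0) from
    tendsto_zero_iff_norm_tendsto_zero.mpr h
  refine squeeze_zero' (Filter.Eventually.of_forall fun k => norm_nonneg _) ?_
    (tendsto_pow_atTop_nhds_zero_of_lt_one q.coe_nonneg hq1')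
  filter_upwards [hgelf.eventually_lt_const hq, Filter.eventually_gt_atTop 0] with k hk hk0
  have hk0' : (0 : ℝ) < k := by exact_mod_cast hk0
  rw [one_div, ENNReal.rpow_inv_lt_iff hk0', ENNReal.rpow_natCast] at hk
  have : ‖A ^ k‖₊ < q ^ k := by exact_mod_cast hk
  exact_mod_cast this.le

end PowTendsto

/-- The homogeneous discrete Lyapunov equation of a Schur stable matrix has only the zero
solution. -/
theorem Matrix.eq_zero_of_transpose_mul_mul_eq {n : ℕ} {A X : Matrix (Fin n) (Fin n) ℝ}
    (hA : ∀ μ ∈ spectrum ℂ (A.map (Complex.ofReal ·)), ‖μ‖ < 1) (hX : Aᵀ * X * A = X) :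
    X = 0 := by
  have hpow : ∀ k, (Aᵀ) ^ k * X * A ^ k = X := by
    intro k
    induction k with
    | zero => simp
    | succ k ih =>
      calc _ = (Aᵀ) ^ k * (Aᵀ * X * A) * A ^ k := by
            rw [pow_succ, pow_succ']
            simp only [Matrix.mul_assoc]
        _ = X := by rw [hX, ih]
  have htend : Filter.Tendsto (fun k => A ^ k) Filter.atTop (nhds 0) := by
    have h := Matrix.tendsto_pow_zero_of_spectrum_lt_one hA
    have h' := ((Continuous.matrix_map continuous_id Complex.continuous_re).tendsto
      (0 : Matrix (Fin n) (Fin n) ℂ)).comp h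
    have hmap : ∀ k, (A.map (Complex.ofReal ·)) ^ k = (A ^ k).map (Complex.ofReal ·) := fun k =>
      (map_pow (Complex.ofRealHom.mapMatrix (m := Fin n)) A k).symm
    refine (h'.congr fun k => ?_).trans (by simp)
    ext i j
    simp [hmap]
  have hcont : Continuous fun B : Matrix (Fin n) (Fin n) ℝ => Bᵀ * X * B := by fun_prop
  have hlim := (hcont.tendsto 0).comp htend
  have hconst : (fun B : Matrix (Fin n) (Fin n) ℝ => Bᵀ * X * B) ∘ (fun k => A ^ k) =
      fun _ => X := by
    funext k
    simp [transpose_pow, hpow]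
  rw [hconst] at hlim
  simpa using tendsto_nhds_unique hlim tendsto_const_nhds |>.symm

/-- A positive semidefinite `T` fixing a positive diagonal `Σ` under the congruence
`Σ ↦ T Σ T` is the identity. -/
theorem Matrix.PosSemidef.eq_one_of_mul_diagonal_mul {n : ℕ} {T : Matrix (Fin n) (Fin n) ℝ}
    (hT : T.PosSemidef) {σ : Fin n → ℝ} (hσ : ∀ i, 0 < σ i)
    (h : T * diagonal σ * T = diagonal σ) : T = 1 := by
  have hD : T * diagonal σ * (T - 1) = -((T - 1) * diagonal σ) := by
    rw [Matrix.mul_sub, h, Matrix.sub_mul]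
    simp
  rw [← sub_eq_zero]
  ext i j
  let d : Fin n → ℝ := fun i => (T - 1) i j
  let y : Fin n → ℝ := diagonal σ *ᵥ d
  have hcol : T *ᵥ y = -(σ j • d) := by
    ext k
    calc (T *ᵥ y) k = ((T * diagonal σ) *ᵥ d) k := by rw [mulVec_mulVec]
      _ = (T * diagonal σ * (T - 1)) k j := rfl
      _ = _ := by rw [hD, neg_apply, mul_diagonal, mul_comm]; rfl
  have hnn : 0 ≤ y ⬝ᵥ (T *ᵥ y) := by simpa using hT.dotProduct_mulVec_nonneg y
  have hval : y ⬝ᵥ (T *ᵥ y) = -(σ j * ∑ k, σ k * d k ^ 2) := by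
    rw [hcol]
    simp only [y, dotProduct, mulVec_diagonal, Pi.neg_apply, Pi.smul_apply, smul_eq_mul,
      Finset.mul_sum, ← Finset.sum_neg_distrib]
    exact Finset.sum_congr rfl fun k _ => by ring
  have hterm : ∀ k ∈ Finset.univ, 0 ≤ σ k * d k ^ 2 := fun k _ =>
    mul_nonneg (hσ k).le (sq_nonneg _)
  have hsum : ∑ k, σ k * d k ^ 2 = 0 := by
    have := Finset.sum_nonneg hterm
    have := hσ j
    nlinarith
  have := (Finset.sum_eq_zero_iff_of_nonneg hterm).mp hsum i (Finset.mem_univ i)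
  simpa [(hσ i).ne', d] using this

theorem obsvMatrix_mul_pow_mul_ctrbMatrix {n : ℕ} (A : Matrix (Fin n) (Fin n) ℝ)
    (b c : Fin n → ℝ) (k : ℕ) :
    obsvMatrix A c * A ^ k * ctrbMatrix A b =
      hankelSub (fun t => c ⬝ᵥ (A ^ t).mulVec b) (fun i : Fin n => (i : ℕ) + k)
        (fun j : Fin n => (j : ℕ)) := by
  ext i j
  have : (obsvMatrix A c * A ^ k * ctrbMatrix A b) i j =
      ((c ᵥ* A ^ (i : ℕ)) ᵥ* A ^ k) ⬝ᵥ (A ^ (j : ℕ) *ᵥ b) := rfl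
  rw [this, vecMul_vecMul, ← dotProduct_mulVec, mulVec_mulVec, ← pow_add, ← pow_add]
  rfl

/-- A shifted finite section of a totally positive Hankel matrix is positive semidefinite. -/
theorem HankelTotallyPositive.posSemidef {g : ℕ → ℝ} (hg : HankelTotallyPositive g) (n k : ℕ) :
    (hankelSub g (fun i : Fin n => (i : ℕ) + k) (fun j : Fin n => (j : ℕ))).PosSemidef := by
  refine .of_principal_minors_nonneg ?_ fun p f hf => ?_
  · ext i j
    simp only [hankelSub, conjTranspose_apply, of_apply, star_trivial]
    congr 1
    omega
  · exact hg p (fun i => (f i : ℕ) + k) (fun j => (f j : ℕ))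
      (fun i j hij => Nat.add_lt_add_right (hf hij) k) (fun i j hij => hf hij)

/-- A balanced realization of an impulse response with totally positive Hankel matrix is a
symmetric positive semidefinite system. -/
theorem IsBalancedRealization.posSemidef_and_eq {n : ℕ} {A : Matrix (Fin n) (Fin n) ℝ}
    {b c σ : Fin n → ℝ} (hbal : IsBalancedRealization A b c σ)
    (htp : HankelTotallyPositive (fun t => c ⬝ᵥ (A ^ t).mulVec b)) :
    A.PosSemidef ∧ b = c := by
  obtain ⟨hA, hctrb, -, -, hσ, hP, hQ⟩ := hbal
  set C := ctrbMatrix A b with hC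
  set O := obsvMatrix A c with hO
  have hCu : IsUnit C.det := isUnit_iff_ne_zero.mpr hctrb
  have hCt : IsUnit Cᵀ.det := by rwa [det_transpose]
  let T : Matrix (Fin n) (Fin n) ℝ := (Cᵀ)⁻¹ * O
  have hCT : Cᵀ * T = O := mul_nonsing_inv_cancel_left _ _ hCt
  have hpsd : ∀ k, (T * A ^ k).PosSemidef := by
    intro k
    have h := (htp.posSemidef n k).conjTranspose_mul_mul_same C⁻¹
    rw [← obsvMatrix_mul_pow_mul_ctrbMatrix, conjTranspose_eq_transpose_of_trivial,
      transpose_nonsing_inv, ← hC, ← hO] at h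
    have heq : (Cᵀ)⁻¹ * (O * A ^ k * C) * C⁻¹ = T * A ^ k := by
      rw [Matrix.mul_assoc, mul_nonsing_inv_cancel_right _ _ hCu, ← Matrix.mul_assoc]
    rwa [heq] at h
  have hT : T.PosSemidef := by simpa using hpsd 0
  have hTA : (T * A).PosSemidef := by simpa using hpsd 1
  have hTt : Tᵀ = T := by simpa using hT.isHermitian.eq
  have hcomm : Aᵀ * T = T * A := by
    have := hTA.isHermitian.eq
    rwa [conjTranspose_eq_transpose_of_trivial, transpose_mul, hTt] at this
  have hTb : T *ᵥ b = c := by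
    ext j
    have h0 : 0 < n := j.pos
    have h1 : (Cᵀ * T) ⟨0, h0⟩ j = O ⟨0, h0⟩ j := by rw [hCT]
    have h2 : (b ᵥ* T) j = c j := by
      have hc : O ⟨0, h0⟩ j = c j := by simp [hO, obsvMatrix]
      rw [← hc, ← h1]
      simp [hC, ctrbMatrix, mul_apply, vecMul, dotProduct]
    rw [← h2, ← mulVec_transpose, hTt]
  have hTcong : T * (A * diagonal σ * Aᵀ - diagonal σ + vecMulVec b b) * T =
      Aᵀ * (T * diagonal σ * T) * A - T * diagonal σ * T + vecMulVec c c := by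
    have hv : T * vecMulVec b b * T = vecMulVec c c := by
      rw [mul_vecMulVec, vecMulVec_mul, hTb, ← mulVec_transpose, hTt, hTb]
    rw [Matrix.mul_add, Matrix.add_mul, Matrix.mul_sub, Matrix.sub_mul, hv]
    congr 2
    calc T * (A * diagonal σ * Aᵀ) * T = (T * A) * diagonal σ * (Aᵀ * T) := by
          simp only [Matrix.mul_assoc]
      _ = (Aᵀ * T) * diagonal σ * (T * A) := by rw [hcomm]
      _ = _ := by simp only [Matrix.mul_assoc]
  rw [hP, Matrix.mul_zero, Matrix.zero_mul] at hTcong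
  have hzero : T * diagonal σ * T - diagonal σ = 0 := by
    refine Matrix.eq_zero_of_transpose_mul_mul_eq hA ?_
    rw [Matrix.mul_sub, Matrix.sub_mul, ← sub_eq_zero]
    calc _ = (Aᵀ * (T * diagonal σ * T) * A - T * diagonal σ * T + vecMulVec c c) -
          (Aᵀ * diagonal σ * A - diagonal σ + vecMulVec c c) := by abel
      _ = 0 := by rw [← hTcong, hQ, sub_zero]
  have hT1 : T = 1 := hT.eq_one_of_mul_diagonal_mul hσ (sub_eq_zero.mp hzero)
  rw [hT1] at hTA hTb
  exact ⟨by simpa using hTA, by simpa using hTb⟩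

/-- If `(A,b,c)` is a balanced realization of `g(t) = cA^{t-1}b` with pairwise
distinct Hankel singular values and `H(g)` is totally positive, then for every
truncation order `1 ≤ r ≤ n` the Hankel matrix of the balanced truncation of
order `r` is totally positive: balanced truncation preserves total positivity
of the Hankel matrix. -/
theorem balanced_truncation_preserves_total_positivity
    {n : ℕ} (A : Matrix (Fin n) (Fin n) ℝ) (b c : Fin n → ℝ) (σ : Fin n → ℝ)
    (hbal : IsBalancedRealization A b c σ)
    (hdist : ∀ i j : Fin n, i < j → σ j < σ i)
    (htp : HankelTotallyPositive (fun t => c ⬝ᵥ (A ^ t).mulVec b))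
    (r : ℕ) (hr1 : 1 ≤ r) (hrn : r ≤ n) :
    HankelTotallyPositive (truncResponse A b c r hrn) := by
  obtain ⟨hA, rfl⟩ := hbal.posSemidef_and_eq htp
  exact (hA.submatrix (Fin.castLE hrn)).hankelTotallyPositive _
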